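/- arXiv:0807.4536 — 2 statements merged into one kernel-verified Lean document; each statement's English description precedes it below -/
import Mathlib

section
/- For every real z with 0 < z < 1, the following identity holds: ln 2 − ∑_{k=0}^∞ ( −(k+2)·((1−z)³·z^k·(k+1)/2)·ln((1−z)³·z^k·(k+1)/2) ) + ∑_{k=0}^∞ ∑_{m=1}^{k+1} ( −(1−z)³·z^k·m·ln((1−z)³·z^k·m) ) = (1−z)³·∑_{k=0}^∞ ((k+1)(k+2)/2)·ln(k+1)·z^k − (1−z)²·∑_{k=2}^∞ k·(ln k)·z^{k−1}. (The right-hand side is the paper's closed form C_p^{(1)} = (1−z)²·∂_z[∂_s Li_s(z)|_{s=0}] − ((1−z)³/2)·∂_z²[z·∂_s Li_s(z)|_{s=0}], expressed in nats, where Li_s(z) = ∑_{k≥1} z^k/k^s.) -/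
lemma aux_summable (z : ℝ) (hz0 : 0 < z) (hz1 : z < 1) (c : ℕ → ℝ)
    (hc : ∀ k : ℕ, |c k| ≤ ((k : ℝ) + 1) ^ 4) : Summable (fun k => c k * z ^ k) := by
  have h1 : Summable (fun k : ℕ => ((k : ℝ)) ^ 4 * z ^ k) :=
    summable_pow_mul_geometric_of_norm_lt_one 4 (by rw [Real.norm_eq_abs, abs_of_pos hz0]; exact hz1)
  have h2 := ((summable_nat_add_iff 1).2 h1).mul_left z⁻¹
  refine Summable.of_norm_bounded h2 ?_
  intro k
  rw [Real.norm_eq_abs, abs_mul, abs_of_pos (pow_pos hz0 k)]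
  have : z⁻¹ * (((k + 1 : ℕ) : ℝ) ^ 4 * z ^ (k + 1)) = ((k : ℝ) + 1) ^ 4 * z ^ k := by
    push_cast; field_simp; ring
  rw [this]
  exact mul_le_mul_of_nonneg_right (hc k) (pow_pos hz0 k).le

lemma aux_log (k : ℕ) : 0 ≤ Real.log ((k : ℝ) + 1) ∧ Real.log ((k : ℝ) + 1) ≤ k := by
  have hk : (0 : ℝ) ≤ k := Nat.cast_nonneg k
  refine ⟨Real.log_nonneg (by linarith), ?_⟩
  have := Real.log_le_sub_one_of_pos (show (0 : ℝ) < k + 1 by linarith)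
  linarith

noncomputable def auxL (k : ℕ) : ℝ := ∑ m ∈ Finset.Icc 1 (k + 1), (m : ℝ) * Real.log m

lemma auxL_succ (k : ℕ) :
    auxL (k + 1) = auxL k + ((k : ℝ) + 2) * Real.log ((k : ℝ) + 2) := by
  unfold auxL
  rw [Finset.sum_Icc_succ_top (by omega)]
  push_cast
  rw [show (k : ℝ) + 1 + 1 = k + 2 by ring]

lemma auxL_zero : auxL 0 = 0 := by simp [auxL]

lemma auxL_bound (k : ℕ) : 0 ≤ auxL k ∧ auxL k ≤ ((k : ℝ) + 1) ^ 3 := by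
  induction k with
  | zero => simp [auxL_zero]
  | succ k ih =>
    rw [auxL_succ]
    have hl := aux_log (k + 1)
    have hk : (0 : ℝ) ≤ k := Nat.cast_nonneg k
    push_cast at hl ⊢
    rw [show (k : ℝ) + 1 + 1 = k + 2 by ring] at *
    have h1 := mul_nonneg (show (0 : ℝ) ≤ k + 2 by linarith) hl.1
    have h2 := mul_le_mul_of_nonneg_left hl.2 (show (0 : ℝ) ≤ k + 2 by linarith)
    constructor
    · linarith [ih.1]
    · nlinarith [ih.2, sq_nonneg (k : ℝ)]

lemma sum_Icc_cast (k : ℕ) :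
    ∑ m ∈ Finset.Icc 1 (k + 1), (m : ℝ) = ((k : ℝ) + 1) * ((k : ℝ) + 2) / 2 := by
  induction k with
  | zero => norm_num
  | succ k ih =>
    rw [Finset.sum_Icc_succ_top (by omega), ih]
    push_cast; ring

lemma aux_W (z : ℝ) (hz0 : 0 < z) (hz1 : z < 1) :
    HasSum (fun k : ℕ => (((k : ℝ) + 1) * ((k : ℝ) + 2) / 2) * z ^ k) (1 / (1 - z) ^ 3) := by
  have := hasSum_choose_mul_geometric_of_norm_lt_one 2
    (show ‖z‖ < 1 by rw [Real.norm_eq_abs, abs_of_pos hz0]; exact hz1)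
  have e : (fun k : ℕ => (((k : ℝ) + 1) * ((k : ℝ) + 2) / 2) * z ^ k) =
      fun n : ℕ => (((n + 2).choose 2 : ℕ) : ℝ) * z ^ n := by
    funext k
    rw [Nat.cast_choose_two]
    push_cast; ring
  rw [e]
  exact this

lemma aux_S (z : ℝ) (hz0 : 0 < z) (hz1 : z < 1) :
    Summable (fun k : ℕ => auxL k * z ^ k) := by
  refine aux_summable z hz0 hz1 _ fun k => ?_
  have hk : (0 : ℝ) ≤ k := Nat.cast_nonneg k
  rw [abs_of_nonneg (auxL_bound k).1]
  exact (auxL_bound k).2.trans (pow_le_pow_right₀ (by linarith) (by norm_num))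

lemma aux_T (z : ℝ) (hz0 : 0 < z) (hz1 : z < 1) :
    (1 - z) * ∑' k : ℕ, auxL k * z ^ k =
      ∑' j : ℕ, ((j : ℝ) + 2) * Real.log ((j : ℝ) + 2) * z ^ (j + 1) := by
  have hS := aux_S z hz0 hz1
  have h1 := hS.tsum_eq_zero_add
  have h2 : Summable (fun k : ℕ => auxL (k + 1) * z ^ (k + 1)) := (summable_nat_add_iff 1).2 hS
  have h3 := h2.tsum_sub (hS.mul_left z)
  rw [tsum_mul_left] at h3
  have h4 : ∀ k : ℕ, auxL (k + 1) * z ^ (k + 1) - z * (auxL k * z ^ k) =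
      ((k : ℝ) + 2) * Real.log ((k : ℝ) + 2) * z ^ (k + 1) := by
    intro k; rw [auxL_succ]; ring
  simp only [h4] at h3
  rw [auxL_zero] at h1
  rw [h3]
  linarith

/-- For every `0 < z < 1`, the single-letter private classical capacity lower bound (in
nats) `ln 2 - H(N(I/2)) + max_ψ H(N(|ψ⟩⟨ψ|))` has the closed form
`(1-z)³ ∑_{k=0}^∞ ((k+1)(k+2)/2) ln(k+1) z^k - (1-z)² ∑_{k=2}^∞ k (ln k) z^{k-1}`,
i.e. the paper's `C_p^{(1)} = (1-z)² ∂_z[∂_s Li_s(z)|_{s=0}]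
- ((1-z)³/2) ∂_z²[z ∂_s Li_s(z)|_{s=0}]`. -/
theorem private_classical_capacity_lower_bound (z : ℝ) (hz0 : 0 < z) (hz1 : z < 1) :
    Real.log 2 -
        (∑' k : ℕ,
          (-(((k : ℝ) + 2) * ((1 - z) ^ 3 * z ^ k * ((k : ℝ) + 1) / 2) *
            Real.log ((1 - z) ^ 3 * z ^ k * ((k : ℝ) + 1) / 2)))) +
        (∑' k : ℕ, ∑ m ∈ Finset.Icc 1 (k + 1),
          (-((1 - z) ^ 3 * z ^ k * (m : ℝ) *
            Real.log ((1 - z) ^ 3 * z ^ k * (m : ℝ))))) =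
      (1 - z) ^ 3 *
          (∑' k : ℕ, (((k : ℝ) + 1) * ((k : ℝ) + 2) / 2) * Real.log ((k : ℝ) + 1) * z ^ k) -
        (1 - z) ^ 2 *
          (∑' j : ℕ, ((j : ℝ) + 2) * Real.log ((j : ℝ) + 2) * z ^ (j + 1)) := by
  have hA : 0 < 1 - z := by linarith
  have hA3 : 0 < (1 - z) ^ 3 := by positivity
  have hW := aux_W z hz0 hz1
  have hS := aux_S z hz0 hz1
  have hT := aux_T z hz0 hz1
  have hWk : Summable (fun k : ℕ => ((((k : ℝ) + 1) * ((k : ℝ) + 2) / 2) * (k : ℝ)) * z ^ k) := by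
    refine aux_summable z hz0 hz1 _ fun k => ?_
    have hk : (0 : ℝ) ≤ k := Nat.cast_nonneg k
    rw [abs_of_nonneg (by positivity), ← sub_nonneg]
    ring_nf; positivity
  have hWl : Summable (fun k : ℕ =>
      ((((k : ℝ) + 1) * ((k : ℝ) + 2) / 2) * Real.log ((k : ℝ) + 1)) * z ^ k) := by
    refine aux_summable z hz0 hz1 _ fun k => ?_
    have hk : (0 : ℝ) ≤ k := Nat.cast_nonneg k
    have hl := aux_log k
    have hw : (0 : ℝ) ≤ (((k : ℝ) + 1) * ((k : ℝ) + 2) / 2) := by positivity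
    rw [abs_of_nonneg (mul_nonneg hw hl.1)]
    refine (mul_le_mul_of_nonneg_left hl.2 hw).trans ?_
    rw [← sub_nonneg]
    ring_nf; positivity
  have e1 : ∀ k : ℕ, (-(((k : ℝ) + 2) * ((1 - z) ^ 3 * z ^ k * ((k : ℝ) + 1) / 2) *
            Real.log ((1 - z) ^ 3 * z ^ k * ((k : ℝ) + 1) / 2))) =
      (-(1 - z) ^ 3 * (Real.log ((1 - z) ^ 3) - Real.log 2)) *
          ((((k : ℝ) + 1) * ((k : ℝ) + 2) / 2) * z ^ k) +
        (-(1 - z) ^ 3 * Real.log z) * (((((k : ℝ) + 1) * ((k : ℝ) + 2) / 2) * (k : ℝ)) * z ^ k) +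
        (-(1 - z) ^ 3) *
          (((((k : ℝ) + 1) * ((k : ℝ) + 2) / 2) * Real.log ((k : ℝ) + 1)) * z ^ k) := by
    intro k
    have hk : (0 : ℝ) < (k : ℝ) + 1 := by positivity
    have hzk : 0 < z ^ k := pow_pos hz0 k
    rw [Real.log_div (by positivity) (by norm_num), Real.log_mul (by positivity) hk.ne',
      Real.log_mul hA3.ne' hzk.ne', Real.log_pow z k]
    ring
  have e2 : ∀ k : ℕ, (∑ m ∈ Finset.Icc 1 (k + 1),
          (-((1 - z) ^ 3 * z ^ k * (m : ℝ) *
            Real.log ((1 - z) ^ 3 * z ^ k * (m : ℝ))))) =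
      (-(1 - z) ^ 3 * Real.log ((1 - z) ^ 3)) *
          ((((k : ℝ) + 1) * ((k : ℝ) + 2) / 2) * z ^ k) +
        (-(1 - z) ^ 3 * Real.log z) * (((((k : ℝ) + 1) * ((k : ℝ) + 2) / 2) * (k : ℝ)) * z ^ k) +
        (-(1 - z) ^ 3) * (auxL k * z ^ k) := by
    intro k
    have hzk : 0 < z ^ k := pow_pos hz0 k
    have : ∀ m ∈ Finset.Icc 1 (k + 1), (-((1 - z) ^ 3 * z ^ k * (m : ℝ) *
            Real.log ((1 - z) ^ 3 * z ^ k * (m : ℝ)))) =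
        (-(1 - z) ^ 3 * z ^ k * (Real.log ((1 - z) ^ 3) + k * Real.log z)) * (m : ℝ) +
          (-(1 - z) ^ 3 * z ^ k) * ((m : ℝ) * Real.log m) := by
      intro m hm
      have hm1 : 0 < m := (Finset.mem_Icc.1 hm).1
      have hm0 : (0 : ℝ) < m := by exact_mod_cast hm1
      rw [Real.log_mul (by positivity) hm0.ne',
        Real.log_mul hA3.ne' hzk.ne', Real.log_pow z k]
      ring
    rw [Finset.sum_congr rfl this, Finset.sum_add_distrib, ← Finset.mul_sum, ← Finset.mul_sum,
      sum_Icc_cast, auxL]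
    ring
  have E1 := ((hW.mul_left (-(1 - z) ^ 3 * (Real.log ((1 - z) ^ 3) - Real.log 2))).add
    (hWk.hasSum.mul_left (-(1 - z) ^ 3 * Real.log z))).add (hWl.hasSum.mul_left (-(1 - z) ^ 3))
  have E2 := ((hW.mul_left (-(1 - z) ^ 3 * Real.log ((1 - z) ^ 3))).add
    (hWk.hasSum.mul_left (-(1 - z) ^ 3 * Real.log z))).add (hS.hasSum.mul_left (-(1 - z) ^ 3))
  rw [tsum_congr e1, tsum_congr e2, E1.tsum_eq, E2.tsum_eq, ← hT]
  field_simp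
  ring
end

section
/- Let f : ℝ → ℝ be defined on (−1, 1) by f(z) = (1−z)·∑_{k=2}^∞ (ln k)·z^k. Then for every z with |z| < 1, the second derivative of f at z exists and equals ∑_{k=0}^∞ (k+1)(k+2)·ln((k+2)/(k+1))·z^k. -/
lemma aux_deriv (a : ℕ → ℝ) (m : ℕ)
    (ha : ∀ r : ℝ, 0 ≤ r → r < 1 → Summable fun j : ℕ => |a j| * ((j + m + 1 : ℕ) : ℝ) * r ^ (j + m))
    (z : ℝ) (hz : |z| < 1) :
    HasDerivAt (fun y : ℝ => ∑' j : ℕ, a j * y ^ (j + m + 1))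
      (∑' j : ℕ, a j * (((j + m + 1 : ℕ) : ℝ) * z ^ (j + m))) z := by
  obtain ⟨r, hr1, hr2⟩ := exists_between hz
  have hr0 : 0 < r := lt_of_le_of_lt (abs_nonneg z) hr1
  refine hasDerivAt_tsum_of_isPreconnected (t := Set.Ioo (-r) r) (y₀ := 0)
    (g' := fun j y => a j * (((j + m + 1 : ℕ) : ℝ) * y ^ (j + m)))
    (ha r hr0.le hr2) isOpen_Ioo isPreconnected_Ioo ?_ ?_ ?_ ?_ ?_
  · intro n y _
    have := (hasDerivAt_pow (n + m + 1) y).const_mul (a n)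
    simpa using this
  · intro n y hy
    have hy' : |y| ≤ r := (abs_lt.mpr hy).le
    rw [Real.norm_eq_abs, abs_mul, abs_mul, abs_pow, Nat.abs_cast, ← mul_assoc]
    gcongr
  · exact ⟨by linarith, hr0⟩
  · simpa using summable_zero
  · exact abs_lt.mp hr1

lemma aux_log_nonneg (j : ℕ) : 0 ≤ Real.log (((j : ℝ) + 2) / ((j : ℝ) + 1)) := by
  apply Real.log_nonneg
  rw [le_div_iff₀ (by positivity)]
  linarith

lemma aux_log_le (j : ℕ) : Real.log (((j : ℝ) + 2) / ((j : ℝ) + 1)) ≤ 1 := by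
  have h := Real.log_le_sub_one_of_pos (x := ((j : ℝ) + 2) / ((j : ℝ) + 1)) (by positivity)
  have : ((j : ℝ) + 2) / ((j : ℝ) + 1) ≤ 2 := by
    rw [div_le_iff₀ (by positivity)]
    have : (0 : ℝ) ≤ j := by positivity
    linarith
  linarith

lemma aux_summable_s11 (r : ℝ) (h0 : 0 ≤ r) (h1 : r < 1) :
    Summable fun j : ℕ => ((j : ℝ) + 2) * ((j : ℝ) + 1) * r ^ j := by
  have hn : ‖r‖ < 1 := by rwa [Real.norm_eq_abs, abs_of_nonneg h0]
  have s2 := summable_pow_mul_geometric_of_norm_lt_one 2 hn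
  have s1 := summable_pow_mul_geometric_of_norm_lt_one 1 hn
  have s0 := summable_pow_mul_geometric_of_norm_lt_one 0 hn
  refine ((s2.add (s1.mul_left 3)).add (s0.mul_left 2)).congr ?_
  intro j
  ring

lemma aux_f (z : ℝ) (hz : |z| < 1) :
    (1 - z) * ∑' j : ℕ, Real.log ((j : ℝ) + 2) * z ^ (j + 2) =
      ∑' j : ℕ, Real.log (((j : ℝ) + 2) / ((j : ℝ) + 1)) * z ^ (j + 1 + 1) := by
  have hs : Summable fun j : ℕ => Real.log ((j : ℝ) + 1) * z ^ (j + 1) := by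
    refine Summable.of_norm_bounded (aux_summable_s11 |z| (abs_nonneg z) hz) ?_
    intro j
    have hj : (0 : ℝ) ≤ j := by positivity
    have hl := Real.log_le_sub_one_of_pos (x := (j : ℝ) + 1) (by positivity)
    have hl0 := Real.log_nonneg (x := (j : ℝ) + 1) (by linarith)
    rw [Real.norm_eq_abs, abs_mul, abs_of_nonneg hl0, abs_pow]
    have h2 : |z| ^ (j + 1) ≤ |z| ^ j := pow_le_pow_of_le_one (abs_nonneg z) hz.le (by omega)
    have h3 : Real.log ((j : ℝ) + 1) ≤ ((j : ℝ) + 2) * ((j : ℝ) + 1) := by nlinarith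
    gcongr
  have hs2 : Summable fun j : ℕ => Real.log ((j : ℝ) + 2) * z ^ (j + 2) := by
    refine ((summable_nat_add_iff 1).mpr hs).congr ?_
    intro j
    push_cast
    rw [add_assoc (j : ℝ) 1 1, one_add_one_eq_two]
  have e : ∑' j : ℕ, Real.log ((j : ℝ) + 1) * z ^ (j + 1) =
      ∑' j : ℕ, Real.log ((j : ℝ) + 2) * z ^ (j + 2) := by
    rw [hs.tsum_eq_zero_add]
    simp only [Nat.cast_zero, zero_add, Real.log_one, zero_mul]
    refine tsum_congr fun j => ?_
    push_cast
    rw [add_assoc (j : ℝ) 1 1, one_add_one_eq_two]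
  rw [sub_mul, one_mul]
  nth_rewrite 2 [← e]
  rw [← tsum_mul_left, ← hs2.tsum_sub (hs.mul_left z)]
  refine tsum_congr fun j => ?_
  rw [Real.log_div (by positivity) (by positivity)]
  ring


/-- Let `f : ℝ → ℝ` satisfy `f z = (1-z) ∑_{k=2}^∞ (ln k) z^k` on `(-1, 1)`. Then for
every `z` with `|z| < 1`, the second derivative of `f` at `z` exists and equals
`∑_{k=0}^∞ (k+1)(k+2) ln((k+2)/(k+1)) z^k`. -/
theorem second_deriv_polylog_expression (f : ℝ → ℝ)
    (hf : ∀ z ∈ Set.Ioo (-1 : ℝ) 1,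
      f z = (1 - z) * ∑' j : ℕ, Real.log ((j : ℝ) + 2) * z ^ (j + 2)) :
    ∀ z : ℝ, |z| < 1 →
      HasDerivAt (deriv f)
        (∑' k : ℕ, ((k : ℝ) + 1) * ((k : ℝ) + 2) *
          Real.log (((k : ℝ) + 2) / ((k : ℝ) + 1)) * z ^ k) z := by

  have h1 : ∀ z : ℝ, |z| < 1 → HasDerivAt f (∑' j : ℕ,
      (Real.log (((j : ℝ) + 2) / ((j : ℝ) + 1)) * ((j : ℝ) + 2)) * z ^ (j + 0 + 1)) z := by
    intro z hz
    have h := aux_deriv (fun j : ℕ => Real.log (((j : ℝ) + 2) / ((j : ℝ) + 1))) 1 (by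
      intro r h0 h1
      refine Summable.of_nonneg_of_le (fun j => by positivity) ?_ (aux_summable_s11 r h0 h1)
      intro j
      have hj : (0 : ℝ) ≤ j := by positivity
      rw [abs_of_nonneg (aux_log_nonneg j)]
      have h2 : r ^ (j + 1) ≤ r ^ j := pow_le_pow_of_le_one h0 h1.le (by omega)
      have h3 : Real.log (((j : ℝ) + 2) / ((j : ℝ) + 1)) * ((j + 1 + 1 : ℕ) : ℝ)
          ≤ ((j : ℝ) + 2) * ((j : ℝ) + 1) := by
        push_cast
        nlinarith [aux_log_le j, aux_log_nonneg j]
      gcongr) z hz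
    have e : (∑' j : ℕ, (Real.log (((j : ℝ) + 2) / ((j : ℝ) + 1)) * ((j : ℝ) + 2))
        * z ^ (j + 0 + 1)) = ∑' j : ℕ, Real.log (((j : ℝ) + 2) / ((j : ℝ) + 1)) *
          (((j + 1 + 1 : ℕ) : ℝ) * z ^ (j + 1)) := by
      refine tsum_congr fun j => ?_
      push_cast
      ring
    rw [e]
    refine h.congr_of_eventuallyEq ?_
    filter_upwards [isOpen_Ioo.mem_nhds (abs_lt.mp hz)] with y hy
    rw [hf y hy, aux_f y (abs_lt.mpr hy)]
  intro z hz
  have h := aux_deriv (fun j : ℕ => Real.log (((j : ℝ) + 2) / ((j : ℝ) + 1)) * ((j : ℝ) + 2)) 0 (by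
    intro r h0 h1
    refine Summable.of_nonneg_of_le (fun j => by positivity) ?_ (aux_summable_s11 r h0 h1)
    intro j
    have hj : (0 : ℝ) ≤ j := by positivity
    have hl := aux_log_nonneg j
    have hl1 := aux_log_le j
    rw [abs_of_nonneg (by positivity)]
    have h3 : Real.log (((j : ℝ) + 2) / ((j : ℝ) + 1)) * ((j : ℝ) + 2) * ((j + 0 + 1 : ℕ) : ℝ)
        ≤ ((j : ℝ) + 2) * ((j : ℝ) + 1) := by
      push_cast
      rw [add_zero, mul_assoc]
      exact mul_le_of_le_one_left (by positivity) hl1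
    rw [add_zero j] at *
    gcongr) z hz
  have e : (∑' k : ℕ, ((k : ℝ) + 1) * ((k : ℝ) + 2) *
          Real.log (((k : ℝ) + 2) / ((k : ℝ) + 1)) * z ^ k) =
      ∑' j : ℕ, Real.log (((j : ℝ) + 2) / ((j : ℝ) + 1)) * ((j : ℝ) + 2) *
          (((j + 0 + 1 : ℕ) : ℝ) * z ^ (j + 0)) := by
    refine tsum_congr fun j => ?_
    push_cast
    ring
  rw [e]
  refine h.congr_of_eventuallyEq ?_
  filter_upwards [isOpen_Ioo.mem_nhds (abs_lt.mp hz)] with y hy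
  exact (h1 y (abs_lt.mpr hy)).deriv
end
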